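/- Let R, R̂ ∈ SO(3), let v₁, …, v_n ∈ ℝ³, and let s₁, …, s_n ∈ ℝ. Set υᵢᴮ := Rᵀvᵢ, υ̂ᵢᴮ := R̂ᵀvᵢ, Mᴮ := Σᵢ sᵢ·υᵢᴮ(υᵢᴮ)ᵀ, and R̃ := RᵀR̂. Then [Σᵢ (sᵢ/2)·(υ̂ᵢᴮ × υᵢᴮ)]× = P_a(Mᴮ·R̃); equivalently, vex(P_a(Mᴮ·R̃)) = Σᵢ (sᵢ/2)·(υ̂ᵢᴮ × υᵢᴮ). -/

import Mathlib

open Matrix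

noncomputable section

/-- The skew-symmetric matrix `[x]×` associated to `x ∈ ℝ³`. -/
def skew (x : Fin 3 → ℝ) : Matrix (Fin 3) (Fin 3) ℝ :=
  !![0, -x 2, x 1; x 2, 0, -x 0; -x 1, x 0, 0]

/-- The anti-symmetric projection `P_a(A) = (A - Aᵀ)/2`. -/
def Pa (A : Matrix (Fin 3) (Fin 3) ℝ) : Matrix (Fin 3) (Fin 3) ℝ :=
  (1/2 : ℝ) • (A - Aᵀ)

/-- `vex(P_a(A)) = (1/2)(A₃₂−A₂₃, A₁₃−A₃₁, A₂₁−A₁₂)`. -/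
def vexPa (A : Matrix (Fin 3) (Fin 3) ℝ) : Fin 3 → ℝ :=
  ![(1/2) * (A 2 1 - A 1 2), (1/2) * (A 0 2 - A 2 0), (1/2) * (A 1 0 - A 0 1)]

/-- Normalized Euclidean distance `‖A‖_I = (1/4)Tr(I₃ − A)`. -/
def normI (A : Matrix (Fin 3) (Fin 3) ℝ) : ℝ :=
  (1/4) * (1 - A).trace

/-!
The orthogonality `R Rᵀ = 1` gives `(Rᵀ v)ᵀ (Rᵀ R̂) = (R̂ᵀ v)ᵀ`, so `Mᴮ R̃ = ∑ᵢ sᵢ υᵢ υ̂ᵢᵀ`. As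
`A ↦ vex (P_a A)` is linear and sends the rank-one matrix `a bᵀ` to `(b × a) / 2`, the vector
identity follows; applying `[·]×` to it gives the matrix identity, since `[vex (P_a A)]× = P_a A`.
-/

lemma vecMulVec_transpose_mulVec_mul_transpose_mul {α k l m n : Type*} [CommSemiring α] [Fintype m]
    [DecidableEq m] [Fintype n] {R : Matrix m n α} (hR : R * Rᵀ = 1) (S : Matrix m l α)
    (w : k → α) (v : m → α) :
    vecMulVec w (Rᵀ *ᵥ v) * (Rᵀ * S) = vecMulVec w (Sᵀ *ᵥ v) := by
  rw [vecMulVec_mul, mulVec_transpose, mulVec_transpose, vecMul_vecMul, ← Matrix.mul_assoc, hR,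
    Matrix.one_mul]

lemma isLinearMap_vexPa : IsLinearMap ℝ vexPa where
  map_add A B := by
    ext j
    fin_cases j <;> simp [vexPa] <;> ring
  map_smul c A := by
    ext j
    fin_cases j <;> simp [vexPa] <;> ring

lemma vexPa_sum {ι : Type*} (t : Finset ι) (A : ι → Matrix (Fin 3) (Fin 3) ℝ) :
    vexPa (∑ i ∈ t, A i) = ∑ i ∈ t, vexPa (A i) :=
  map_sum (isLinearMap_vexPa.mk' vexPa) A t

lemma vexPa_vecMulVec (a b : Fin 3 → ℝ) :
    vexPa (vecMulVec a b) = (1 / 2 : ℝ) • crossProduct b a := by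
  ext j
  fin_cases j <;> simp [vexPa, vecMulVec_apply, cross_apply] <;> ring

lemma skew_vexPa (A : Matrix (Fin 3) (Fin 3) ℝ) : skew (vexPa A) = Pa A := by
  ext j k
  fin_cases j <;> fin_cases k <;> simp [skew, vexPa, Pa] <;> ring

theorem vexPa_MB_Rtilde_eq_sum_cross_general {ι m : Type*} [Fintype m] [DecidableEq m]
    (t : Finset ι) {R : Matrix m (Fin 3) ℝ} (hR : R * Rᵀ = 1) (Rh : Matrix m (Fin 3) ℝ)
    (v : ι → m → ℝ) (s : ι → ℝ) :
    skew (∑ i ∈ t, (s i / 2) • crossProduct (Rhᵀ *ᵥ v i) (Rᵀ *ᵥ v i))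
      = Pa ((∑ i ∈ t, s i • vecMulVec (Rᵀ *ᵥ v i) (Rᵀ *ᵥ v i)) * (Rᵀ * Rh)) ∧
    vexPa ((∑ i ∈ t, s i • vecMulVec (Rᵀ *ᵥ v i) (Rᵀ *ᵥ v i)) * (Rᵀ * Rh))
      = ∑ i ∈ t, (s i / 2) • crossProduct (Rhᵀ *ᵥ v i) (Rᵀ *ᵥ v i) := by
  have moment_mul_error :
      (∑ i ∈ t, s i • vecMulVec (Rᵀ *ᵥ v i) (Rᵀ *ᵥ v i)) * (Rᵀ * Rh)
        = ∑ i ∈ t, s i • vecMulVec (Rᵀ *ᵥ v i) (Rhᵀ *ᵥ v i) := by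
    simp only [Finset.sum_mul, Matrix.smul_mul, vecMulVec_transpose_mulVec_mul_transpose_mul hR]
  have vector_identity :
      vexPa ((∑ i ∈ t, s i • vecMulVec (Rᵀ *ᵥ v i) (Rᵀ *ᵥ v i)) * (Rᵀ * Rh))
        = ∑ i ∈ t, (s i / 2) • crossProduct (Rhᵀ *ᵥ v i) (Rᵀ *ᵥ v i) := by
    simp only [moment_mul_error, vexPa_sum, isLinearMap_vexPa.map_smul, vexPa_vecMulVec,
      smul_smul, mul_one_div]
  exact ⟨by rw [← vector_identity, skew_vexPa], vector_identity⟩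

/-- eq. (44): with `υᵢᴮ = Rᵀvᵢ`, `υ̂ᵢᴮ = R̂ᵀvᵢ`,
`Mᴮ = Σᵢ sᵢ υᵢᴮ(υᵢᴮ)ᵀ`, `R̃ = RᵀR̂`, one has
`[Σᵢ (sᵢ/2)(υ̂ᵢᴮ × υᵢᴮ)]× = P_a(MᴮR̃)`, i.e.
`vex(P_a(MᴮR̃)) = Σᵢ (sᵢ/2)(υ̂ᵢᴮ × υᵢᴮ)`. -/
theorem vexPa_MB_Rtilde_eq_sum_cross (n : ℕ)
    (R Rh : Matrix (Fin 3) (Fin 3) ℝ)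
    (hR : Rᵀ * R = 1) (hR' : R * Rᵀ = 1) (hdet : R.det = 1)
    (hRh : Rhᵀ * Rh = 1) (hRh' : Rh * Rhᵀ = 1) (hdeth : Rh.det = 1)
    (v : Fin n → Fin 3 → ℝ) (s : Fin n → ℝ) :
    skew (∑ i, (s i / 2) • crossProduct (Rhᵀ *ᵥ v i) (Rᵀ *ᵥ v i))
      = Pa ((∑ i, s i • vecMulVec (Rᵀ *ᵥ v i) (Rᵀ *ᵥ v i)) * (Rᵀ * Rh)) ∧
    vexPa ((∑ i, s i • vecMulVec (Rᵀ *ᵥ v i) (Rᵀ *ᵥ v i)) * (Rᵀ * Rh))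
      = ∑ i, (s i / 2) • crossProduct (Rhᵀ *ᵥ v i) (Rᵀ *ᵥ v i) := by
  exact vexPa_MB_Rtilde_eq_sum_cross_general Finset.univ hR' Rh v s
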